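/- For any positive integers g and k, there exists a finite simple graph G of girth at least g whose chromatic number is at least k. -/

import Mathlib

open Finset

namespace ErdosGirth

lemma card_fix {ι κ β : Type} [Fintype ι] [Fintype κ] [Fintype β] [DecidableEq κ]
    (e : ι ↪ κ) (c : ι → β) (P : (κ → β) → Prop) [DecidablePred P]
    (hP : ∀ f, P f → ∀ j, f (e j) = c j) :
    (univ.filter P).card * Fintype.card β ^ Fintype.card ι
      ≤ Fintype.card β ^ Fintype.card κ := by
  classical
  rw [← Fintype.card_fun, ← Fintype.card_fun, ← Finset.card_univ (α := ι → β), ← Finset.card_product,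
    ← Finset.card_univ (α := κ → β)]
  apply Finset.card_le_card_of_injOn (fun p => Function.extend e p.2 p.1)
  · simp
  · rintro ⟨f, h⟩ hf ⟨f', h'⟩ hf' heq
    simp only [coe_product, Set.mem_prod, coe_filter, Set.mem_ofPred_eq, mem_univ, true_and] at hf hf' heq
    have h1 : h = h' := by
      funext j
      have := congrFun heq (e j)
      rwa [e.injective.extend_apply, e.injective.extend_apply] at this
    have h2 : f = f' := by
      funext x
      by_cases hx : ∃ j, e j = x
      · obtain ⟨j, rfl⟩ := hx
        rw [hP f hf.1 j, hP f' hf'.1 j]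
      · have := congrFun heq x
        rwa [Function.extend_apply' _ _ _ hx, Function.extend_apply' _ _ _ hx] at this
    rw [h1, h2]

/-- Potential labelled cycles of length `m+1`. -/
abbrev Cyc (V : Type) (M m : ℕ) : Type :=
  (Fin (m+1) → V) × (Fin (m+1) ↪ Fin M) × (Fin (m+1) → Bool)

def Real {V : Type} {M m : ℕ} (f : Fin M → V × V) (x : Cyc V M m) : Prop :=
  ∀ j, f (x.2.1 j) = if x.2.2 j then (x.1 j, x.1 (j+1)) else (x.1 (j+1), x.1 j)

open Classical in
lemma sum_cyc {V : Type} [Fintype V] (n : ℕ) (hn : n = Fintype.card V) (D m : ℕ) (hV : 0 < n) :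
    ∑ f : Fin (D * n) → V × V,
      (univ.filter fun x : Cyc V (D * n) m => Real f x).card
    ≤ (2 * D) ^ (m+1) * Fintype.card (Fin (D * n) → V × V) := by
  have hN : 0 < (n * n) ^ (m+1) := by positivity
  apply Nat.le_of_mul_le_mul_right _ hN
  have hsw : ∑ f : Fin (D * n) → V × V,
      (univ.filter fun x : Cyc V (D * n) m => Real f x).card
      = ∑ x : Cyc V (D * n) m, (univ.filter fun f : Fin (D * n) → V × V => Real f x).card :=
    Finset.sum_card_bipartiteAbove_eq_sum_card_bipartiteBelow _
  rw [hsw, Finset.sum_mul]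
  have hx : ∀ x ∈ (univ : Finset (Cyc V (D * n) m)),
      (univ.filter fun f : Fin (D * n) → V × V => Real f x).card * (n * n) ^ (m+1)
      ≤ Fintype.card (Fin (D * n) → V × V) := by
    intro x _
    have := card_fix (β := V × V) x.2.1
      (fun j => if x.2.2 j then (x.1 j, x.1 (j+1)) else (x.1 (j+1), x.1 j))
      (fun f => Real f x) (fun f h => h)
    rw [Fintype.card_prod, ← hn, Fintype.card_fin, Fintype.card_fin] at this
    rw [Fintype.card_fun, Fintype.card_prod, ← hn, Fintype.card_fin]
    exact this
  refine (Finset.sum_le_card_nsmul _ _ _ hx).trans ?_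
  rw [smul_eq_mul, mul_right_comm]
  apply Nat.mul_le_mul_right
  rw [Finset.card_univ, Fintype.card_prod, Fintype.card_prod, Fintype.card_embedding_eq]
  simp only [Fintype.card_fun, Fintype.card_fin, Fintype.card_bool, ← hn]
  calc n ^ (m+1) * ((D*n).descFactorial (m+1) * 2 ^ (m+1))
      ≤ n ^ (m+1) * ((D*n)^(m+1) * 2 ^ (m+1)) := by
        gcongr; exact Nat.descFactorial_le_pow _ _
    _ = _ := by rw [← mul_pow, ← mul_pow, ← mul_pow]; congr 1; ring

def Ind {V : Type} {M : ℕ} (f : Fin M → V × V) (t : ℕ) (S : Finset V) : Prop :=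
  t ≤ S.card ∧ ∀ i, (f i).1 ∈ S → (f i).2 ∈ S → (f i).1 = (f i).2

open Classical in
lemma sum_ind {V : Type} [Fintype V] (n : ℕ) (hn : n = Fintype.card V) (D q t : ℕ) (hq : 1 ≤ q)
    (hD : 8 * (q-1)^D ≤ q^D) (ht : n * n ≤ q * (t * t - t)) :
    4 ^ n * ∑ f : Fin (D * n) → V × V,
      (univ.filter fun S : Finset V => Ind f t S).card
    ≤ Fintype.card (Fin (D * n) → V × V) := by
  have hsw : ∑ f : Fin (D * n) → V × V,
      (univ.filter fun S : Finset V => Ind f t S).card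
      = ∑ S : Finset V, (univ.filter fun f : Fin (D * n) → V × V =>
          Ind f t S).card :=
    Finset.sum_card_bipartiteAbove_eq_sum_card_bipartiteBelow _
  rw [hsw]
  have hS : ∀ S ∈ (univ : Finset (Finset V)), 8 ^ n * (univ.filter fun f : Fin (D * n) → V × V =>
          Ind f t S).card ≤ Fintype.card (Fin (D * n) → V × V) := by
    intro S _
    by_cases h : t ≤ S.card
    swap
    · simp [h, Ind]
    have h1 : (univ.filter fun f : Fin (D * n) → V × V => Ind f t S)
        = Fintype.piFinset fun _ => S.offDiagᶜ := by
      ext f; simp only [Ind, h, true_and, mem_filter, mem_univ, Fintype.mem_piFinset, mem_compl, mem_offDiag, not_and, not_not, ne_eq]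
    rw [h1, Fintype.card_piFinset_const, Fintype.card_fun, Fintype.card_prod, ← hn, Fintype.card_fin,
      pow_mul, pow_mul, ← mul_pow]
    apply Nat.pow_le_pow_left
    set a := #(S.offDiagᶜ) with ha
    have ha' : a + (S.card * S.card - S.card) = n * n := by
      rw [ha, ← Finset.offDiag_card, Finset.card_compl_add_card, Fintype.card_prod, hn]
    have h2 : t * t - t ≤ S.card * S.card - S.card := by
      rw [← Nat.mul_sub_one, ← Nat.mul_sub_one]
      gcongr
    have h3 : q * a ≤ (q-1) * (n * n) := by
      obtain ⟨p, rfl⟩ : ∃ p, q = p + 1 := ⟨q-1, by omega⟩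
      simp only [Nat.add_sub_cancel]
      have := Nat.mul_le_mul_left (p+1) h2
      nlinarith
    have hq0 : 0 < q ^ D := by positivity
    apply Nat.le_of_mul_le_mul_left _ hq0
    calc q^D * (8 * a^D) = 8 * (q*a)^D := by rw [mul_pow]; ring
      _ ≤ 8 * ((q-1) * (n*n))^D := by gcongr
      _ = (8 * (q-1)^D) * (n*n)^D := by rw [mul_pow]; ring
      _ ≤ q^D * (n*n)^D := by gcongr
  have h2 : 0 < 2 ^ n := by positivity
  apply Nat.le_of_mul_le_mul_left _ h2
  rw [← mul_assoc, ← mul_pow, Finset.mul_sum]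
  refine (Finset.sum_le_card_nsmul _ _ _ hS).trans ?_
  rw [Finset.card_univ, Fintype.card_finset, smul_eq_mul, hn]

lemma exists_D (q : ℕ) (hq : 1 ≤ q) : ∃ D, 8 * (q-1)^D ≤ q^D := by
  obtain ⟨p, rfl⟩ : ∃ p, q = p + 1 := ⟨q-1, by omega⟩
  have hp : (0:ℝ) < p + 1 := by positivity
  obtain ⟨D, hD⟩ := exists_pow_lt_of_lt_one (show (0:ℝ) < 1/8 by norm_num)
    (show (p:ℝ)/(p+1) < 1 by rw [div_lt_one hp]; linarith)
  refine ⟨D, ?_⟩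
  rw [div_pow, div_lt_iff₀ (by positivity)] at hD
  have : (8:ℝ) * p^D ≤ (p+1)^D := by linarith
  simp only [Nat.add_sub_cancel]
  exact_mod_cast this

open Classical in
lemma exists_f (g K : ℕ) (hK : 0 < K) : ∃ n t M : ℕ, n = 2*K*t ∧ ∃ f : Fin M → Fin n × Fin n,
    2 * ∑ m ∈ range g, (univ.filter fun x : Cyc (Fin n) M m => Real f x).card < n ∧
    ∀ S : Finset (Fin n), ¬ Ind f t S := by
  have hq : 1 ≤ 8 * K * K := by nlinarith
  obtain ⟨D, hD⟩ := exists_D (8*K*K) hq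
  set C := ∑ m ∈ range g, (2*D)^(m+1) with hC
  obtain ⟨t, htt⟩ : ∃ t, t = 4 * C + 2 := ⟨_, rfl⟩
  obtain ⟨n, hn⟩ : ∃ n, n = 2*K*t := ⟨_, rfl⟩
  have hnt : t ≤ n := by rw [hn]; nlinarith
  have hn' : Fintype.card (Fin n) = n := Fintype.card_fin n
  refine ⟨n, t, D * n, hn, ?_⟩
  by_contra hcon
  push Not at hcon
  have hind := sum_ind (V := Fin n) n hn'.symm D (8*K*K) t hq hD (by
    rw [hn]
    have : t * t ≤ 2 * (t * t - t) := by
      rw [← Nat.mul_sub_one]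
      have : t ≤ 2 * (t-1) := by omega
      nlinarith
    nlinarith [Nat.mul_le_mul_left (4*K*K) this])
  have hcyc : ∀ m ∈ range g, _ := fun m _ => sum_cyc (V := Fin n) n hn'.symm D m (by omega)
  have hcyc' := Finset.sum_le_sum hcyc
  rw [← Finset.sum_mul, ← hC, Finset.sum_comm] at hcyc'
  have hall : ∀ f ∈ (univ : Finset (Fin (D * n) → Fin n × Fin n)), n ≤
      2 * ∑ m ∈ range g, (univ.filter fun x : Cyc (Fin n) (D*n) m => Real f x).card
      + n * (univ.filter fun S : Finset (Fin n) => Ind f t S).card := by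
    intro f _
    by_cases h : 2 * ∑ m ∈ range g, (univ.filter fun x : Cyc (Fin n) (D*n) m => Real f x).card < n
    · obtain ⟨S, hS⟩ := hcon f h
      have : 0 < (univ.filter fun S : Finset (Fin n) => Ind f t S).card :=
        Finset.card_pos.2 ⟨S, by simpa only [mem_filter, mem_univ, true_and] using hS⟩
      have := Nat.mul_le_mul_left n this
      omega
    · omega
  have hs := Finset.card_nsmul_le_sum _ _ _ hall
  rw [Finset.sum_add_distrib, ← Finset.mul_sum, ← Finset.mul_sum, smul_eq_mul, Finset.card_univ] at hs
  have hT : 0 < Fintype.card (Fin (D * n) → Fin n × Fin n) := by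
    rw [Fintype.card_fun, Fintype.card_prod, hn']
    have : 0 < n := by omega
    positivity
  generalize Fintype.card (Fin (D * n) → Fin n × Fin n) = T at *
  generalize (∑ f : Fin (D * n) → Fin n × Fin n, ∑ m ∈ range g, (univ.filter fun x : Cyc (Fin n) (D*n) m => Real f x).card) = A at *
  generalize (∑ f : Fin (D * n) → Fin n × Fin n, (univ.filter fun S : Finset (Fin n) => Ind f t S).card) = B at *
  have h4 : 2 ≤ 4 ^ n := by
    calc 2 ≤ 4^1 := by norm_num
      _ ≤ 4 ^ n := Nat.pow_le_pow_right (by norm_num) (by omega)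
  have hB : 2 * B ≤ T := le_trans (Nat.mul_le_mul_right _ h4) hind
  have h5 : n * (2 * B) ≤ n * T := Nat.mul_le_mul_left _ hB
  have h6 : (4 * C + 1) * T ≤ n * T := Nat.mul_le_mul_right _ (by omega)
  nlinarith

def gr {V : Type} {M : ℕ} (f : Fin M → V × V) : SimpleGraph V :=
  SimpleGraph.fromRel fun u v => ∃ i, f i = (u, v)

lemma gr_adj {V : Type} {M : ℕ} (f : Fin M → V × V) (u v : V) :
    (gr f).Adj u v ↔ u ≠ v ∧ ((∃ i, f i = (u, v)) ∨ ∃ i, f i = (v, u)) :=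
  SimpleGraph.fromRel_adj _ _ _

lemma exists_cyc {V : Type} {M m : ℕ} (f : Fin M → V × V) (a : V) (w : (gr f).Walk a a)
    (hw : w.IsCycle) (hm : w.length = m + 1) : ∃ x : Cyc V M m, Real f x ∧ x.1 0 = a := by
  have hadj : ∀ j : Fin (m+1), ∃ p : Fin M × Bool, f p.1 =
      if p.2 then (w.getVert j, w.getVert (j+1)) else (w.getVert (j+1), w.getVert j) := by
    intro j
    have h := w.adj_getVert_succ (i := j) (by omega)
    rw [gr_adj] at h
    rcases h.2 with ⟨i, hi⟩ | ⟨i, hi⟩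
    · exact ⟨(i, true), by simpa using hi⟩
    · exact ⟨(i, false), by simpa using hi⟩
  choose p hp using hadj
  have hE : ∀ j : Fin (m+1), s((f (p j).1).1, (f (p j).1).2) = s(w.getVert j, w.getVert (j+1)) := by
    intro j
    rw [hp j]
    split_ifs
    · rfl
    · exact Sym2.eq_swap
  have hlen : w.edges.length = m + 1 := by rw [SimpleGraph.Walk.length_edges, hm]
  have hinj : Function.Injective fun j => (p j).1 := by
    intro i j hij
    have h1 := hE i
    have h2 := hE j
    simp only at hij
    rw [hij, h2] at h1
    have hnd := hw.isTrail.edges_nodup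
    have := (List.Nodup.getElem_inj_iff hnd (i := i) (j := j) (hi := by omega) (hj := by omega)).1
      (by rw [SimpleGraph.Walk.getElem_edges, SimpleGraph.Walk.getElem_edges, h1])
    exact Fin.ext this
  have hlast : ∀ j : Fin (m+1), w.getVert ((j + 1 : Fin (m+1)) : ℕ) = w.getVert (j+1) := by
    intro j
    rw [Fin.val_add_one]
    split_ifs with h
    · subst h
      simp [← hm]
    · rfl
  refine ⟨(fun j => w.getVert j, ⟨_, hinj⟩, fun j => (p j).2), ?_, by simp⟩
  intro j
  simp only [Function.Embedding.coeFn_mk, hlast]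
  exact hp j

end ErdosGirth

open ErdosGirth Classical in
/-- For any positive integers `g` and `k`, there exists a finite simple graph of girth at
least `g` whose chromatic number is at least `k`. -/
theorem exists_girth_large_chromaticNumber (g k : ℕ) (hg : 0 < g) (hk : 0 < k) :
    ∃ (V : Type) (_ : Fintype V) (G : SimpleGraph V),
      (g : ℕ∞) ≤ G.girth ∧ (k : ℕ∞) ≤ G.chromaticNumber := by
  obtain ⟨n, t, M, hn, f, hcyc, hind⟩ := exists_f g (max k 3) (by omega)
  set K := max k 3 with hKdef
  let B : Finset (Fin n) := (range g).biUnion fun m =>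
    (univ.filter fun x : Cyc (Fin n) M m => Real f x).image fun x => x.1 0
  have hB : B.card ≤ ∑ m ∈ range g, (univ.filter fun x : Cyc (Fin n) M m => Real f x).card :=
    Finset.card_biUnion_le.trans (Finset.sum_le_sum fun m _ => Finset.card_image_le)
  let G := (gr f).induce {v | v ∉ B}
  have hcol : ∀ m, G.Colorable m → K ≤ m := by
    intro m hm
    by_contra hlt
    obtain ⟨c⟩ := hm.mono (not_le.1 hlt).le
    have hcard : Fintype.card (Fin K) * t < Fintype.card {v | v ∉ B} := by
      have h1 : Fintype.card {v | v ∉ B} = Bᶜ.card :=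
        Fintype.card_of_subtype _ (by simp)
      rw [h1, Finset.card_compl, Fintype.card_fin, Fintype.card_fin]
      have : 2 * (K * t) = n := by rw [hn]; ring
      omega
    obtain ⟨y, hy⟩ := Fintype.exists_lt_card_fiber_of_mul_lt_card c hcard
    apply hind ((univ.filter fun x => c x = y).map (Function.Embedding.subtype _))
    refine ⟨by rw [Finset.card_map]; exact hy.le, ?_⟩
    intro i h1 h2
    simp only [Finset.mem_map, mem_filter, mem_univ, true_and] at h1 h2
    obtain ⟨u, hu, hu'⟩ := h1
    obtain ⟨v, hv, hv'⟩ := h2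
    by_contra hne
    apply c.valid (v := u) (w := v) _ (hu.trans hv.symm)
    change (gr f).Adj u.1 v.1
    rw [gr_adj]
    change u.1 = _ at hu'
    change v.1 = _ at hv'
    rw [hu', hv']
    exact ⟨hne, Or.inl ⟨i, rfl⟩⟩
  have hchr : (K : ℕ∞) ≤ G.chromaticNumber := by
    rw [SimpleGraph.le_chromaticNumber_iff_colorable]
    exact_mod_cast hcol
  refine ⟨{v | v ∉ B}, inferInstance, G, ?_, le_trans (by exact_mod_cast le_max_left _ _) hchr⟩
  have hac : ¬ G.IsAcyclic := by
    intro h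
    have := hcol 2 h.colorable_two
    omega
  obtain ⟨a, w, hw, hl⟩ := SimpleGraph.exists_girth_eq_length.2 hac
  rw [hl]
  by_contra hlt
  have hlt : w.length < g := by simpa using hlt
  let φ : G ↪g gr f := SimpleGraph.Embedding.induce _
  have hw' := hw.map (f := φ.toHom) φ.injective
  have h3 := hw.three_le_length
  obtain ⟨x, hx, hx0⟩ := exists_cyc (m := w.length - 1) f _ _ hw' (by
    rw [SimpleGraph.Walk.length_map]; omega)
  apply a.2
  simp only [B, Finset.mem_biUnion, Finset.mem_image, mem_filter, mem_univ, true_and, mem_range]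
  exact ⟨w.length - 1, by omega, x, hx, hx0⟩
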